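/- Let N ≥ 1, let a, w ∈ ℂ^N both be conjugate centro-symmetric (i.e., lie in 𝕍), and assume a ≠ 0. Let w_∥ = ((a^H w)/‖a‖²)·a and w_⊥ = w − w_∥ be the orthogonal decomposition of w along a. Then w_∥ ∈ 𝕍 and w_⊥ ∈ 𝕍; more generally, for every real β, the updated weight w_⊥ + β·w_∥ belongs to 𝕍. -/

import Mathlib

/-!
Conjugate centro-symmetric vectors form a real subspace of `ℂ^N`, and the inner product of two of
them is real, since reversing the index order turns the sum `hip x y` into its own conjugate.
Hence the coefficient `hip a w / nsq a` is real, and both components of `w` along `a`, as well as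
their real combinations, stay in this real subspace.
-/

open Complex BigOperators ComplexConjugate

/-- Hermitian inner product on `ℂ^N`, conjugate-linear in the first argument. -/
noncomputable def hip {N : ℕ} (x y : Fin N → ℂ) : ℂ := ∑ i, conj (x i) * y i

/-- Squared Euclidean norm on `ℂ^N`. -/
noncomputable def nsq {N : ℕ} (x : Fin N → ℂ) : ℝ := ∑ i, Complex.normSq (x i)

/-- A vector `v ∈ ℂ^N` is conjugate centro-symmetric if
`v i = conj (v (N+1−i))` for all positions `i = 1,…,N`. -/
def ccs {N : ℕ} (v : Fin N → ℂ) : Prop := ∀ i : Fin N, v i = conj (v i.rev)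

theorem conj_hip_of_ccs {N : ℕ} {x y : Fin N → ℂ} (hx : ccs x) (hy : ccs y) :
    conj (hip x y) = hip x y := by
  unfold hip
  rw [map_sum, ← Equiv.sum_comp Fin.revPerm]
  refine Finset.sum_congr rfl fun i _ => ?_
  rw [Fin.revPerm_apply, map_mul, ← hx i, ← hy i, hx i, Complex.conj_conj]

theorem ccs_smul_of_conj {N : ℕ} {v : Fin N → ℂ} (hv : ccs v) {c : ℂ} (hc : conj c = c) :
    ccs (c • v) := fun i => by
  rw [Pi.smul_apply, Pi.smul_apply, smul_eq_mul, smul_eq_mul, map_mul, hc, ← hv i]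

theorem ccs_add {N : ℕ} {u v : Fin N → ℂ} (hu : ccs u) (hv : ccs v) : ccs (u + v) := fun i => by
  rw [Pi.add_apply, Pi.add_apply, map_add, ← hu i, ← hv i]

theorem ccs_sub {N : ℕ} {u v : Fin N → ℂ} (hu : ccs u) (hv : ccs v) : ccs (u - v) := fun i => by
  rw [Pi.sub_apply, Pi.sub_apply, map_sub, ← hu i, ← hv i]

/-- Closure property used in Appendix G of the paper: the orthogonal
decomposition of a conjugate centro-symmetric vector along a conjugate
centro-symmetric direction stays in `𝕍`, as does any real combination
`w⊥ + β·w∥`. -/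
theorem stmt12 {N : ℕ} (hN : 1 ≤ N) (a w : Fin N → ℂ)
    (ha : ccs a) (hw : ccs w) (hane : a ≠ 0)
    (wpar wperp : Fin N → ℂ)
    (hpar : wpar = ((hip a w) / (nsq a : ℂ)) • a)
    (hperp : wperp = w - wpar) :
    ccs wpar ∧ ccs wperp ∧ ∀ β : ℝ, ccs (wperp + (β : ℂ) • wpar) := by
  have h1 : ccs wpar := by
    rw [hpar]
    refine ccs_smul_of_conj ha ?_
    rw [map_div₀, conj_hip_of_ccs ha hw, Complex.conj_ofReal]
  have h2 : ccs wperp := hperp ▸ ccs_sub hw h1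
  exact ⟨h1, h2, fun β => ccs_add h2 (ccs_smul_of_conj h1 (Complex.conj_ofReal β))⟩
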